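/- Every smooth projective curve over a perfect field k has a dense affine open subscheme which is isomorphic to a smooth affine plane curve, i.e. to a smooth closed subscheme of A_k² defined by a single polynomial equation. -/

import Mathlib

open AlgebraicGeometry CategoryTheory Polynomial TopologicalSpace

noncomputable section

namespace BakerModels

/-- The ring of Laurent polynomials in two variables over `k`,
`k[x^{±1}, y^{±1}]`, realised as the monoid algebra of `ℤ × ℤ`. -/
abbrev LaurentPoly₂ (k : Type) [CommRing k] : Type := AddMonoidAlgebra k (ℤ × ℤ)

/-- A finitely supported coefficient function determines a Laurent polynomial. -/
def ofCoeffs {k : Type} [CommRing k] (f : (ℤ × ℤ) →₀ k) : LaurentPoly₂ k := .ofCoeff f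

/-- Base change of a Laurent polynomial along a ring homomorphism (applied to
the coefficients). -/
def mapLaurent {k K : Type} [CommRing k] [CommRing K] (φ : k →+* K)
    (f : LaurentPoly₂ k) : LaurentPoly₂ K :=
  ofCoeffs (Finsupp.mapRange φ φ.map_zero f.coeff)

/-- `Spec k`, the base scheme of a field (or commutative ring) `k`. -/
abbrev SpecOf (k : Type) [CommRing k] : Scheme := Spec (CommRingCat.of k)

/-- The affine curve `C₀ : f = 0` in the two–dimensional torus
`𝔾ₘ² = Spec k[x^{±1}, y^{±1}]`. -/
def torusCurve (k : Type) [CommRing k] (f : LaurentPoly₂ k) : Scheme :=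
  Spec (CommRingCat.of (LaurentPoly₂ k ⧸ Ideal.span {f}))

/-- The structure morphism of `torusCurve k f` over `Spec k`. -/
def torusCurveOver (k : Type) [CommRing k] (f : LaurentPoly₂ k) :
    torusCurve k f ⟶ SpecOf k :=
  Spec.map (CommRingCat.ofHom (algebraMap k (LaurentPoly₂ k ⧸ Ideal.span {f})))

/-- A (Noetherian) local ring is *regular* if its maximal ideal can be generated
by `dim R` many elements. -/
def IsRegularLocalRing (R : Type) [CommRing R] [IsLocalRing R] : Prop :=
  IsNoetherianRing R ∧
    ∃ s : Finset R, Ideal.span (s : Set R) = IsLocalRing.maximalIdeal R ∧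
      (s.card : WithBot (WithTop ℕ)) = ringKrullDim R

/-- A scheme is *regular at a point* if its stalk there is a regular local ring.
(Over a perfect base field this is the same as smoothness at the point.) -/
def RegularAt (X : Scheme) (x : X) : Prop :=
  IsRegularLocalRing (X.presheaf.stalk x)

/-- The regular locus `Reg X` of a scheme. -/
def regularLocus (X : Scheme) : Set X := {x | RegularAt X x}

/-- The singular locus `Sing X` of a scheme. -/
def singularLocus (X : Scheme) : Set X := {x | ¬ RegularAt X x}

/-- A scheme is regular if it is regular at all of its points. -/
def RegularScheme (X : Scheme) : Prop := ∀ x, RegularAt X x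

/-- A morphism of schemes is *birational* if it restricts to an isomorphism
over a dense open of the target. -/
def IsBirationalHom {X Y : Scheme} (f : X ⟶ Y) : Prop :=
  ∃ V : Y.Opens, Dense (V : Set Y) ∧ IsIso (f ∣_ V)

/-- Two schemes over a common base are *birational over the base* if they
contain isomorphic dense open subschemes (the isomorphism commuting with the
structure morphisms). -/
def AreBirationalOver {S X Y : Scheme} (φX : X ⟶ S) (φY : Y ⟶ S) : Prop :=
  ∃ (U : X.Opens) (V : Y.Opens) (e : U.toScheme ≅ V.toScheme),
    Dense (U : Set X) ∧ Dense (V : Set Y) ∧ e.hom ≫ V.ι ≫ φY = U.ι ≫ φX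

/-- A *curve* is an (equidimensional) scheme all of whose irreducible
components are one-dimensional. -/
def IsCurve (X : Scheme) : Prop :=
  ∀ T ∈ irreducibleComponents (X : Type), topologicalKrullDim T = 1

/-- A projective curve over a field `k` (a proper curve over `Spec k`). -/
structure ProjCurve (k : Type) [Field k] where
  X : Scheme
  structMap : X ⟶ SpecOf k
  isCurve : IsCurve X
  proper : IsProper structMap

/-- A smooth projective curve over a field `k`. -/
structure SmoothProjCurve (k : Type) [Field k] extends ProjCurve k where
  smooth : IsSmooth structMap

/-!
A smooth scheme of relative dimension `n` over a Noetherian domain `R` has a basis of affine opens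
that are étale over `𝔸ⁿ`, and finitely many disjoint ones can be glued; so a dense affine open
`Spec A` is étale over `Spec R[x₁, …, xₙ]`. Generically over `𝔸ⁿ` the algebra `A` becomes a finite
étale algebra over an infinite field, and a generic element generates it, since it is separated by
the embeddings into an algebraically closed field. Clearing denominators, `A` is isomorphic to
`R[x₁, …, xₙ][y] / (g)` after inverting some nonzero `h ∈ R[x₁, …, xₙ]`. Translating `y` makes
`g(0) ≠ 0`, and `h` may be taken of the form `e g(0)` with `g(0) ∣ e`. Then
`G(y) = g(h y) / g(0) = 1 + e y (⋯)` is a polynomial whose vanishing already forces `h` to be a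
unit, so substituting `h y` for `y` presents the localization at `h` as the coordinate ring of the
hypersurface `G = 0` in `𝔸ⁿ⁺¹`. A smooth curve is the case `n = 1`.
-/

section Monogenic

open scoped TensorProduct

theorem exists_injective_linearMap_apply {ι F V W : Type*} [Finite ι] [Field F] [Infinite F]
    [AddCommGroup V] [Module F V] [AddCommGroup W] [Module F W] {σ : ι → V →ₗ[F] W}
    (hσ : Function.Injective σ) : ∃ v, Function.Injective fun i => σ i v := by
  let P : {p : ι × ι // p.1 ≠ p.2} → Subspace F V := fun p => LinearMap.ker (σ p.1.1 - σ p.1.2)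
  have hP : ⋃ p, (P p : Set V) ≠ Set.univ := fun h => by
    obtain ⟨⟨⟨i, j⟩, hij⟩, h⟩ := Subspace.exists_eq_top_of_iUnion_eq_univ h
    exact hij (hσ (sub_eq_zero.mp (LinearMap.ker_eq_top.mp h)))
  obtain ⟨v, hv⟩ := (Set.ne_univ_iff_exists_notMem _).mp hP
  refine ⟨v, fun i j hij => by_contra fun hne => hv (Set.mem_iUnion.mpr ⟨⟨(i, j), hne⟩, ?_⟩)⟩
  exact sub_eq_zero.mpr hij

theorem aeval_surjective_of_injective_algHom_apply {ι F K Ω : Type*} [Fintype ι] [Field F]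
    [CommRing K] [Algebra F K] [Module.Finite F K] [CommRing Ω] [IsDomain Ω] [Algebra F Ω]
    (σ : ι → K →ₐ[F] Ω) (hcard : Module.finrank F K ≤ Fintype.card ι) {y : K}
    (hy : Function.Injective fun i => σ i y) : Function.Surjective (aeval (R := F) y) := by
  have hmin : minpoly F y ≠ 0 := minpoly.ne_zero (Algebra.IsIntegral.isIntegral y)
  have hdeg : Fintype.card ι ≤ (minpoly F y).natDegree := by
    refine Finset.card_univ.symm.trans_le ?_
    rw [← Finset.card_map ⟨_, hy⟩]
    refine (Polynomial.card_le_degree_of_subset_roots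
      (p := (minpoly F y).map (algebraMap F Ω)) fun z hz => ?_).trans natDegree_map_le
    obtain ⟨i, -, rfl⟩ := Finset.mem_map.mp hz
    have hroot : aeval (σ i y) (minpoly F y) = 0 := by
      rw [aeval_algHom_apply, minpoly.aeval, map_zero]
    exact (mem_roots_map_of_injective (FaithfulSMul.algebraMap_injective F Ω) hmin).mpr hroot
  have hspan := (linearIndependent_pow (K := F) y).span_eq_top_of_card_eq_finrank' <|
    (linearIndependent_pow (K := F) y).fintype_card_le_finrank.antisymm
      (by simpa using hcard.trans hdeg)
  suffices (⊤ : Submodule F K) ≤ LinearMap.range (aeval (R := F) y).toLinearMap from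
    LinearMap.range_eq_top.mp (top_le_iff.mp this)
  rw [← hspan, Submodule.span_le]
  rintro _ ⟨i, rfl⟩
  exact ⟨X ^ (i : ℕ), by simp⟩

theorem exists_injective_algHom_of_etale (F K Ω : Type*) [Field F] [CommRing K] [Algebra F K]
    [Algebra.Etale F K] [Field Ω] [IsSepClosed Ω] [Algebra F Ω] :
    ∃ σ : Fin (Module.finrank F K) → K →ₐ[F] Ω, Function.Injective σ := by
  obtain ⟨n, ⟨e⟩⟩ := Algebra.IsFiniteSplit.nonempty_algEquiv_fun Ω (Ω ⊗[F] K)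
  obtain rfl : n = Module.finrank F K := by
    rw [← Module.finrank_baseChange (R := Ω), e.toLinearEquiv.finrank_eq, Module.finrank_fin_fun]
  let τ i : Ω ⊗[F] K →ₐ[Ω] Ω := (Pi.evalAlgHom Ω (fun _ => Ω) i).comp e.toAlgHom
  refine ⟨fun i => ((τ i).restrictScalars F).comp Algebra.TensorProduct.includeRight,
    fun i j hij => ?_⟩
  have hτ : τ i = τ j := Algebra.TensorProduct.ext (by ext) hij
  have h := DFunLike.congr_fun hτ (e.symm (Pi.single i 1))
  by_contra hne
  simp [τ, Pi.single_eq_of_ne' hne] at h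

theorem exists_aeval_surjective_of_etale (F K : Type*) [Field F] [Infinite F] [CommRing K]
    [Algebra F K] [Algebra.Etale F K] : ∃ y : K, Function.Surjective (aeval (R := F) y) := by
  have : Module.Finite F K := Algebra.FormallyUnramified.finite_of_free F K
  obtain ⟨σ, hσ⟩ := exists_injective_algHom_of_etale F K (AlgebraicClosure F)
  obtain ⟨y, hy⟩ := exists_injective_linearMap_apply
    (σ := fun i => (σ i).toLinearMap) (AlgHom.toLinearMap_injective.comp hσ)
  exact ⟨y, aeval_surjective_of_injective_algHom_apply σ (by simp) hy⟩

end Monogenic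

section SpreadingOut

variable {R : Type*} [CommRing R] {M : Submonoid R}

theorem exists_mem_forall_exists_dvd {α : Type*} (S : Finset α) {P : α → R → Prop}
    (h : ∀ a ∈ S, ∃ m ∈ M, P a m) : ∃ m ∈ M, ∀ a ∈ S, ∃ d, d ∣ m ∧ P a d := by
  choose! d hdM hdP using h
  exact ⟨∏ a ∈ S, d a, prod_mem hdM, fun a ha => ⟨d a, Finset.dvd_prod_of_mem d ha, hdP a ha⟩⟩

theorem exists_mem_forall_smul_eq_zero {B : Type*} [CommRing B] [Algebra R B] {I : Ideal B}
    (hfg : I.FG) (hI : ∀ x ∈ I, ∃ m ∈ M, m • x = 0) : ∃ m ∈ M, ∀ x ∈ I, m • x = 0 := by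
  obtain ⟨S, rfl⟩ := hfg
  obtain ⟨m, hm, hmS⟩ := exists_mem_forall_exists_dvd S fun x hx => hI x (Ideal.subset_span hx)
  refine ⟨m, hm, fun x hx => ?_⟩
  induction hx using Submodule.span_induction with
  | zero => exact smul_zero m
  | add x y _ _ hx hy => rw [smul_add, hx, hy, add_zero]
  | smul b x _ hx => rw [smul_comm, hx, smul_zero]
  | mem x hx =>
    obtain ⟨d, ⟨c, rfl⟩, hdx⟩ := hmS x hx
    rw [mul_comm, mul_smul, hdx, smul_zero]

theorem exists_mem_forall_exists_pow_smul_mem {A : Type*} [CommRing A] [Algebra R A]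
    [Algebra.FiniteType R A] {B : Subalgebra R A} (hB : ∀ a, ∃ m ∈ M, m • a ∈ B) :
    ∃ m ∈ M, ∀ a, ∃ n : ℕ, m ^ n • a ∈ B := by
  obtain ⟨S, hS⟩ := Algebra.FiniteType.out (R := R) (A := A)
  obtain ⟨m, hm, hmS⟩ := exists_mem_forall_exists_dvd S fun a _ => hB a
  refine ⟨m, hm, fun a => ?_⟩
  induction (hS ▸ Algebra.mem_top : a ∈ Algebra.adjoin R (S : Set A)) using
    Algebra.adjoin_induction with
  | mem a ha =>
    obtain ⟨d, ⟨c, rfl⟩, hda⟩ := hmS a ha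
    exact ⟨1, by simpa [mul_comm d c, mul_smul] using B.smul_mem hda c⟩
  | algebraMap r => exact ⟨0, by simp⟩
  | add x y _ _ hx hy =>
    obtain ⟨p, hp⟩ := hx
    obtain ⟨q, hq⟩ := hy
    refine ⟨p + q, ?_⟩
    rw [smul_add, pow_add, mul_smul (m ^ p) _ y, mul_comm, mul_smul]
    exact add_mem (B.smul_mem hp _) (B.smul_mem hq _)
  | mul x y _ _ hx hy =>
    obtain ⟨p, hp⟩ := hx
    obtain ⟨q, hq⟩ := hy
    refine ⟨p + q, ?_⟩
    rw [pow_add, mul_smul_mul_comm]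
    exact mul_mem hp hq

theorem exists_mem_forall_dvd_nonempty_away_algEquiv {A B : Type*} [CommRing A] [Algebra R A]
    [Algebra.FiniteType R A] [CommRing B] [Algebra R B] (ρ : B →ₐ[R] A) (hfg : (RingHom.ker ρ).FG)
    (hker : ∀ b, ρ b = 0 → ∃ m ∈ M, m • b = 0) (hrange : ∀ a, ∃ m ∈ M, m • a ∈ ρ.range) :
    ∃ m ∈ M, ∀ h, m ∣ h → Nonempty (Localization.Away (algebraMap R B h) ≃ₐ[R]
      Localization.Away (algebraMap R A h)) := by
  obtain ⟨m₁, hm₁, hker⟩ := exists_mem_forall_smul_eq_zero hfg hker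
  obtain ⟨m₂, hm₂, hrange⟩ := exists_mem_forall_exists_pow_smul_mem hrange
  refine ⟨m₁ * m₂, mul_mem hm₁ hm₂, fun h ⟨c, hc⟩ => ?_⟩
  have hinj : Function.Injective (Localization.awayMap (ρ : B →+* A) (algebraMap R B h)) := by
    refine Localization.awayMap_injective_iff.mpr fun b hb => ⟨1, ?_⟩
    rw [pow_one, ← Algebra.smul_def, hc, mul_assoc, mul_comm, mul_smul, hker b hb, smul_zero]
  have hsurj : Function.Surjective (Localization.awayMap (ρ : B →+* A) (algebraMap R B h)) := by
    refine Localization.awayMap_surjective_iff.mpr fun a => ?_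
    obtain ⟨n, hn⟩ := hrange a
    obtain ⟨b, hb⟩ := ρ.range.smul_mem hn ((m₁ * c) ^ n)
    refine ⟨b, n, hb.trans ?_⟩
    rw [smul_smul, ← mul_pow, mul_right_comm, ← hc, Algebra.smul_def, map_pow]
    exact congrArg (· ^ n * a) (ρ.commutes h).symm
  exact ρ.commutes h ▸
    ⟨AlgEquiv.ofBijective (Localization.awayMapₐ ρ (algebraMap R B h)) ⟨hinj, hsurj⟩⟩

end SpreadingOut

section ClosingPoly

variable {R : Type*} [CommRing R]

theorem nonempty_away_adjoinRoot_algEquiv {g G : R[X]} {h : R}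
    (hunit : IsUnit (algebraMap R (AdjoinRoot G) h))
    (hg : aeval (algebraMap R (AdjoinRoot G) h * AdjoinRoot.root G) g = 0)
    (hG : ∀ v : Localization.Away (algebraMap R (AdjoinRoot g) h), algebraMap R _ h * v = 1 →
      aeval (v * algebraMap _ _ (AdjoinRoot.root g)) G = 0) :
    Nonempty (Localization.Away (algebraMap R (AdjoinRoot g) h) ≃ₐ[R] AdjoinRoot G) := by
  set L := Localization.Away (algebraMap R (AdjoinRoot g) h)
  let v : L := IsLocalization.Away.invSelf (algebraMap R (AdjoinRoot g) h)
  let y : L := algebraMap _ L (AdjoinRoot.root g)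
  have hv : algebraMap R L h * v = 1 := by
    rw [IsScalarTower.algebraMap_apply R (AdjoinRoot g) L]
    exact IsLocalization.Away.mul_invSelf _
  let φ₀ : AdjoinRoot g →ₐ[R] AdjoinRoot G := AdjoinRoot.liftAlgHom g (Algebra.ofId R _) _ hg
  have hφ₀ : IsUnit (φ₀ (algebraMap R _ h)) := by rwa [φ₀.commutes]
  let φ : L →ₐ[R] AdjoinRoot G := IsLocalization.Away.liftAlgHom _ hφ₀
  let ψ : AdjoinRoot G →ₐ[R] L := AdjoinRoot.liftAlgHom G (Algebra.ofId R L) (v * y) (hG v hv)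
  have hφ : φ y = algebraMap R _ h * AdjoinRoot.root G :=
    (IsLocalization.Away.lift_eq _ hφ₀ _).trans (AdjoinRoot.liftAlgHom_root ..)
  have hφv : algebraMap R _ h * φ v = 1 := by rw [← φ.commutes, ← map_mul, hv, map_one]
  have hψ : ψ (AdjoinRoot.root G) = v * y := AdjoinRoot.liftAlgHom_root ..
  refine ⟨.ofAlgHom φ ψ (AdjoinRoot.algHom_ext ?_) (IsLocalization.algHom_ext
    (.powers (algebraMap R (AdjoinRoot g) h)) (AdjoinRoot.algHom_ext ?_))⟩
  · rw [AlgHom.comp_apply, hψ, map_mul, hφ, AlgHom.id_apply]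
    linear_combination AdjoinRoot.root G * hφv
  · change ψ (φ y) = y
    rw [hφ, map_mul, hψ, ψ.commutes, ← mul_assoc, hv, one_mul]

/-- The polynomial `g(e g(0) X) / g(0) = 1 + e X (⋯)`. A root of it in an `R`-algebra makes `e`
invertible there, which identifies the localization of `R[X] / (g)` at `e g(0)`, for `g(0) ∣ e`,
with a quotient of `R[X]` by a single polynomial. The division by `g(0)` is carried out through
`Polynomial.divX`, so that it makes sense over any ring. -/
def closingPoly (g : R[X]) (e : R) : R[X] :=
  1 + C e * X * g.divX.comp (C (e * g.coeff 0) * X)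

theorem C_coeff_zero_mul_closingPoly (g : R[X]) (e : R) :
    C (g.coeff 0) * closingPoly g e = g.comp (C (e * g.coeff 0) * X) := by
  nth_rw 3 [← divX_mul_X_add g]
  simp only [closingPoly, add_comp, mul_comp, X_comp, C_comp, map_mul]
  ring

variable {T : Type*} [CommRing T] [Algebra R T]

theorem algebraMap_coeff_zero_mul_aeval_closingPoly (g : R[X]) (e : R) (z : T) :
    algebraMap R T (g.coeff 0) * aeval z (closingPoly g e) =
      aeval (algebraMap R T (e * g.coeff 0) * z) g := by
  simpa [aeval_comp] using congrArg (aeval z) (C_coeff_zero_mul_closingPoly g e)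

theorem isUnit_algebraMap_of_aeval_closingPoly_eq_zero {g : R[X]} {e : R} {z : T}
    (hz : aeval z (closingPoly g e) = 0) : IsUnit (algebraMap R T e) := by
  refine .of_mul_eq_one (-(z * aeval z (g.divX.comp (C (e * g.coeff 0) * X)))) ?_
  rw [closingPoly, map_add, map_mul, map_mul, map_one, aeval_C, aeval_X] at hz
  linear_combination -hz

theorem nonempty_away_adjoinRoot_algEquiv_closingPoly (g : R[X]) {e : R} (hge : g.coeff 0 ∣ e) :
    Nonempty (Localization.Away (algebraMap R (AdjoinRoot g) (e * g.coeff 0)) ≃ₐ[R]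
      AdjoinRoot (closingPoly g e)) := by
  have hroot : aeval (AdjoinRoot.root (closingPoly g e)) (closingPoly g e) = 0 := by simp
  have hunit := isUnit_algebraMap_of_aeval_closingPoly_eq_zero hroot
  refine nonempty_away_adjoinRoot_algEquiv ?_ ?_ fun v hv => ?_
  · rw [map_mul]
    exact hunit.mul (isUnit_of_dvd_unit (map_dvd _ hge) hunit)
  · rw [← algebraMap_coeff_zero_mul_aeval_closingPoly, hroot, mul_zero]
  · have hunit := isUnit_of_dvd_unit (map_dvd _ (dvd_mul_left (g.coeff 0) e)) (.of_mul_eq_one _ hv)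
    rw [← hunit.mul_right_eq_zero, algebraMap_coeff_zero_mul_aeval_closingPoly, ← mul_assoc, hv,
      one_mul, aeval_algebraMap_apply, AdjoinRoot.aeval_eq, AdjoinRoot.mk_self, map_zero]

end ClosingPoly

section GenericallyMonogenic

open scoped TensorProduct nonZeroDivisors

variable {R F A K : Type*} [CommRing R] [Field F] [Algebra R F] [IsFractionRing R F]
  [CommRing A] [Algebra R A] [CommRing K] [Algebra R K] [Algebra F K] [IsScalarTower R F K]
  (ι : A →ₐ[R] K)

theorem exists_smul_mk_eq_zero_of_aeval_eq_zero {a : A} {g : R[X]} {c : F} (hc : c ≠ 0)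
    (hg : g.map (algebraMap R F) = C c * minpoly F (ι a)) {p : R[X]} (hp : aeval a p = 0) :
    ∃ m ∈ R⁰, m • AdjoinRoot.mk g p = 0 := by
  have hp : aeval (ι a) (p.map (algebraMap R F)) = 0 := by
    rw [aeval_map_algebraMap, aeval_algHom_apply, hp, map_zero]
  obtain ⟨w, hw⟩ : g.map (algebraMap R F) ∣ p.map (algebraMap R F) := by
    rw [hg, (isUnit_C.mpr hc.isUnit).mul_left_dvd]
    exact minpoly.dvd F _ hp
  obtain ⟨m, hm, hq⟩ := IsLocalization.integerNormalization_spec R⁰ w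
  refine ⟨m, hm, ?_⟩
  rw [AdjoinRoot.smul_mk, AdjoinRoot.mk_eq_zero]
  refine ⟨IsLocalization.integerNormalization R⁰ w,
    map_injective _ (IsFractionRing.injective R F) ?_⟩
  rw [Polynomial.map_mul, hq, mul_smul_comm, ← hw, Polynomial.map_smul, algebraMap_smul]

variable [IsLocalizedModule R⁰ ι.toLinearMap]

theorem exists_smul_mem_range_aeval {a : A} (ha : Function.Surjective (aeval (R := F) (ι a)))
    (x : A) : ∃ m ∈ R⁰, m • x ∈ (aeval (R := R) a).range := by
  obtain ⟨p, hp⟩ := ha (ι x)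
  obtain ⟨m, hm, hq⟩ := IsLocalization.integerNormalization_spec R⁰ p
  have hι : ι (m • x) = ι (aeval a (IsLocalization.integerNormalization R⁰ p)) := by
    rw [← aeval_algHom_apply, ← aeval_map_algebraMap F, hq, ← algebraMap_smul F m p,
      map_smul (aeval (ι a)) (algebraMap R F m) p, hp, algebraMap_smul, map_smul]
  obtain ⟨s, hs⟩ := IsLocalizedModule.exists_of_eq (S := R⁰) (f := ι.toLinearMap) hι
  refine ⟨s * m, mul_mem s.2 hm, (s : R) • IsLocalization.integerNormalization R⁰ p, ?_⟩
  exact (map_smul (aeval a) (s : R) _).trans (hs.symm.trans (mul_smul (s : R) m x).symm)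

variable [IsDomain R]

include ι in
theorem exists_aeval_surjective_and_coeff_zero_minpoly_ne_zero [Infinite R]
    [Algebra.IsIntegral F K] {y : K} (hy : Function.Surjective (aeval (R := F) y)) :
    ∃ a : A, Function.Surjective (aeval (R := F) (ι a)) ∧ (minpoly F (ι a)).coeff 0 ≠ 0 := by
  obtain ⟨⟨a, s⟩, ha⟩ := IsLocalizedModule.surj R⁰ ι.toLinearMap y
  have hmin : minpoly F (ι a) ≠ 0 := minpoly.ne_zero (Algebra.IsIntegral.isIntegral _)
  obtain ⟨r, hr⟩ : ∃ r : R, (minpoly F (ι a)).eval (algebraMap R F r) ≠ 0 := by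
    by_contra! h
    exact hmin <| eq_zero_of_infinite_isRoot _ <|
      (Set.infinite_range_of_injective (IsFractionRing.injective R F)).mono <|
        Set.range_subset_iff.mpr h
  have hshift : ι (a - algebraMap R A r) = ι a - algebraMap F K (algebraMap R F r) := by
    rw [map_sub, AlgHom.commutes, ← IsScalarTower.algebraMap_apply]
  have hy_eq : y = aeval (ι (a - algebraMap R A r))
      (C (algebraMap R F s)⁻¹ * (X + C (algebraMap R F r))) := by
    have hs : algebraMap R F s ≠ 0 := IsFractionRing.to_map_ne_zero_of_mem_nonZeroDivisors s.2
    simp only [hshift, map_mul, map_add, aeval_C, aeval_X, sub_add_cancel]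
    calc y = (algebraMap R F s)⁻¹ • algebraMap R F s • y := (inv_smul_smul₀ hs y).symm
      _ = (algebraMap R F s)⁻¹ • ι a := by
          rw [algebraMap_smul]
          exact congrArg _ ha
      _ = algebraMap F K (algebraMap R F s)⁻¹ * ι a := Algebra.smul_def _ _
  refine ⟨a - algebraMap R A r, fun x => ?_, ?_⟩
  · obtain ⟨p, rfl⟩ := hy x
    exact ⟨p.comp _, by rw [aeval_comp, ← hy_eq]⟩
  · rw [hshift, minpoly.sub_algebraMap, coeff_zero_eq_eval_zero]
    simpa using hr

theorem exists_map_eq_C_mul_minpoly_and_aeval_eq_zero (a : A) :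
    ∃ g : R[X], (∃ c ≠ 0, g.map (algebraMap R F) = C c * minpoly F (ι a)) ∧ aeval a g = 0 := by
  obtain ⟨b, hb, hg⟩ := IsLocalization.integerNormalization_spec R⁰ (minpoly F (ι a))
  set g := IsLocalization.integerNormalization R⁰ (minpoly F (ι a))
  have hgι : ι (aeval a g) = ι 0 := by
    rw [← aeval_algHom_apply, ← aeval_map_algebraMap F, hg, ← algebraMap_smul F b, map_smul,
      minpoly.aeval, smul_zero, map_zero]
  obtain ⟨s, hs⟩ := IsLocalizedModule.exists_of_eq (S := R⁰) (f := ι.toLinearMap) hgι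
  refine ⟨C (s : R) * g, ⟨algebraMap R F (s * b), ?_, ?_⟩, ?_⟩
  · exact IsFractionRing.to_map_ne_zero_of_mem_nonZeroDivisors (mul_mem s.2 hb)
  · rw [Polynomial.map_mul, map_C, hg, ← algebraMap_smul F b, smul_eq_C_mul, map_mul, C_mul,
      mul_assoc]
  · rw [← smul_eq_C_mul, map_smul]
    exact hs.trans (smul_zero s)

include ι in
theorem exists_away_algEquiv_adjoinRoot [IsNoetherianRing R] [Infinite R] [Algebra.FiniteType R A]
    [Algebra.IsIntegral F K] {y : K} (hy : Function.Surjective (aeval (R := F) y)) :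
    ∃ h : R, h ≠ 0 ∧ ∃ G : R[X],
      Nonempty (Localization.Away (algebraMap R A h) ≃ₐ[R] AdjoinRoot G) := by
  obtain ⟨a, ha, hcoeff⟩ := exists_aeval_surjective_and_coeff_zero_minpoly_ne_zero ι hy
  obtain ⟨g, ⟨c, hc, hg⟩, hga⟩ := exists_map_eq_C_mul_minpoly_and_aeval_eq_zero (F := F) ι a
  have hg0 : g.coeff 0 ≠ 0 := fun h0 => mul_ne_zero hc hcoeff <| by
    rw [← coeff_C_mul, ← hg, coeff_map, h0, map_zero]
  let ρ : AdjoinRoot g →ₐ[R] A := AdjoinRoot.liftAlgHom g (Algebra.ofId R A) a hga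
  obtain ⟨m, hm, hequiv⟩ := exists_mem_forall_dvd_nonempty_away_algEquiv (M := R⁰) ρ
    (IsNoetherian.noetherian _)
    (fun b hb => by
      obtain ⟨p, rfl⟩ := AdjoinRoot.mk_surjective b
      exact exists_smul_mk_eq_zero_of_aeval_eq_zero ι hc hg hb)
    (fun x => by
      obtain ⟨n, hn, p, hp⟩ := exists_smul_mem_range_aeval ι ha x
      exact ⟨n, hn, AdjoinRoot.mk g p, hp⟩)
  obtain ⟨e⟩ := hequiv (m * g.coeff 0 * g.coeff 0) ⟨_, mul_assoc _ _ _⟩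
  obtain ⟨e'⟩ := nonempty_away_adjoinRoot_algEquiv_closingPoly g (dvd_mul_left (g.coeff 0) m)
  exact ⟨_, mul_ne_zero (mul_ne_zero (nonZeroDivisors.ne_zero hm) hg0) hg0, _, ⟨e.symm.trans e'⟩⟩

theorem exists_away_algEquiv_adjoinRoot_of_etale (R A : Type*) [CommRing R] [IsDomain R]
    [IsNoetherianRing R] [Infinite R] [CommRing A] [Algebra R A] [Algebra.Etale R A] :
    ∃ h : R, h ≠ 0 ∧ ∃ G : R[X],
      Nonempty (Localization.Away (algebraMap R A h) ≃ₐ[R] AdjoinRoot G) := by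
  let F := FractionRing R
  have : Infinite F := .of_injective _ (IsFractionRing.injective R F)
  have : Module.Finite F (F ⊗[R] A) := Algebra.FormallyUnramified.finite_of_free F _
  let ι : A →ₐ[R] F ⊗[R] A := Algebra.TensorProduct.includeRight
  have : IsLocalizedModule R⁰ ι.toLinearMap :=
    inferInstanceAs (IsLocalizedModule R⁰ (TensorProduct.mk R F A 1))
  obtain ⟨y, hy⟩ := exists_aeval_surjective_of_etale F (F ⊗[R] A)
  exact exists_away_algEquiv_adjoinRoot ι hy

end GenericallyMonogenic

section Dimension

theorem height_eq_of_isMaximal_mvPolynomial {k : Type*} [Field k] (n : ℕ)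
    (P : Ideal (MvPolynomial (Fin n) k)) [P.IsMaximal] : P.height = n := by
  induction n with
  | zero =>
    have hfield : IsField (MvPolynomial (Fin 0) k) :=
      (MvPolynomial.isEmptyAlgEquiv k (Fin 0)).toMulEquiv.isField (Field.toIsField k)
    have := Ring.isField_iff_maximal_bot.mp hfield
    simp [← this.eq_of_le (Ideal.IsMaximal.ne_top ‹_›) (bot_le : ⊥ ≤ P)]
  | succ n ih =>
    let e := (MvPolynomial.finSuccEquiv k n).toRingEquiv
    have : (P.map e).IsMaximal := Ideal.map_isMaximal_of_equiv e
    let p : Ideal (MvPolynomial (Fin n) k) := (P.map e).comap C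
    have : p.IsMaximal := Polynomial.isMaximal_comap_C_of_isJacobsonRing (P.map e)
    have : (P.map e).LiesOver p := ⟨rfl⟩
    rw [← e.height_map P, Polynomial.height_eq_height_add_one p (P.map e), ih, Nat.cast_succ]

theorem isMaximal_comap_algebraMap_of_finiteType (R : Type*) {A : Type*} [CommRing R]
    [IsJacobsonRing R] [CommRing A] [Algebra R A] [Algebra.FiniteType R A] (M : Ideal A)
    [M.IsMaximal] : (M.comap (algebraMap R A)).IsMaximal := by
  let := Ideal.Quotient.field M
  have : Module.Finite R (A ⧸ M) := finite_of_finite_type_of_isJacobsonRing _ _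
  have := Ideal.isMaximal_comap_of_isIntegral_of_isMaximal (R := R) (⊥ : Ideal (A ⧸ M))
  rwa [IsScalarTower.algebraMap_eq R A (A ⧸ M), ← Ideal.comap_comap, ← RingHom.ker_eq_comap_bot,
    Ideal.Quotient.algebraMap_eq, Ideal.mk_ker] at this

theorem le_ringKrullDim_of_flat (R : Type*) {A : Type*} [CommRing R] [IsNoetherianRing R]
    [IsJacobsonRing R] [CommRing A] [Nontrivial A] [Algebra R A] [Algebra.FiniteType R A]
    [Module.Flat R A] {n : ℕ∞} (hR : ∀ P : Ideal R, P.IsMaximal → n ≤ P.height) :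
    n ≤ ringKrullDim A := by
  obtain ⟨M, hM⟩ := Ideal.exists_maximal A
  have : IsNoetherianRing A := Algebra.FiniteType.isNoetherianRing R A
  have : M.LiesOver (M.comap (algebraMap R A)) := ⟨rfl⟩
  calc (n : WithBot ℕ∞) ≤ (M.comap (algebraMap R A)).height :=
        WithBot.coe_le_coe.mpr (hR _ (isMaximal_comap_algebraMap_of_finiteType R M))
    _ ≤ M.height := by
        rw [Ideal.height_eq_height_add_of_liesOver_of_hasGoingDown (M.comap (algebraMap R A)) M]
        exact WithBot.coe_le_coe.mpr le_self_add
    _ ≤ ringKrullDim A := Ideal.height_le_ringKrullDim_of_ne_top hM.ne_top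

theorem isIrreducible_preimage_of_subset_range {X Y : Type*} [TopologicalSpace X]
    [TopologicalSpace Y] {f : Y → X} (hf : Topology.IsInducing f) {Z : Set X}
    (hZ : IsIrreducible Z) (hZf : Z ⊆ Set.range f) : IsIrreducible (f ⁻¹' Z) := by
  refine ⟨hZ.nonempty.preimage' hZf, fun U V hU hV hZU hZV => ?_⟩
  obtain ⟨U, hU', rfl⟩ := hf.isOpen_iff.mp hU
  obtain ⟨V, hV', rfl⟩ := hf.isOpen_iff.mp hV
  obtain ⟨x, hxZ, hxU, hxV⟩ := hZ.2 U V hU' hV'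
    (let ⟨y, hy, hyU⟩ := hZU; ⟨f y, hy, hyU⟩) (let ⟨y, hy, hyV⟩ := hZV; ⟨f y, hy, hyV⟩)
  obtain ⟨y, rfl⟩ := hZf hxZ
  exact ⟨y, hxZ, hxU, hxV⟩

theorem topologicalKrullDim_le_of_forall_irreducibleComponents {X : Type*} [TopologicalSpace X]
    {n : WithBot ℕ∞} (hX : ∀ T ∈ irreducibleComponents X, topologicalKrullDim T ≤ n) :
    topologicalKrullDim X ≤ n := by
  refine iSup_le fun l => ?_
  obtain ⟨T, hT, hlT⟩ := exists_mem_irreducibleComponents_subset_of_isIrreducible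
    (l.last : Set X) l.last.isIrreducible
  have hl i : (l i : Set X) ⊆ Set.range (Subtype.val : T → X) := by
    rw [Subtype.range_coe]
    exact (SetLike.coe_subset_coe.mpr (l.strictMono.monotone (Fin.le_last i))).trans hlT
  let F i : IrreducibleCloseds T := ⟨Subtype.val ⁻¹' (l i : Set X),
    isIrreducible_preimage_of_subset_range .subtypeVal (l i).isIrreducible (hl i),
    (l i).isClosed.preimage continuous_subtype_val⟩
  have hF : StrictMono F := (OrderEmbedding.ofMapLEIff (β := IrreducibleCloseds T) F
    fun i j => (Set.preimage_subset_preimage_iff (hl i)).trans l.strictMono.le_iff_le).strictMono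
  exact (Order.LTSeries.length_le_krullDim (LTSeries.mk l.length F hF)).trans (hX T hT)

theorem topologicalKrullDim_irreducibleComponent_le_zero {X : Type*} [TopologicalSpace X]
    [JacobsonSpace X] {x : X} (hx : IsOpen {x}) :
    topologicalKrullDim (irreducibleComponent x) ≤ 0 := by
  have hclosed : IsClosed {x} := isClosed_singleton_of_isLocallyClosed_singleton hx.isLocallyClosed
  have hsub : irreducibleComponent x ⊆ {x} :=
    isIrreducible_irreducibleComponent.isPreirreducible.isPreconnected.subset_isClopen
      ⟨hclosed, hx⟩ ⟨x, mem_irreducibleComponent, rfl⟩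
  have := Set.subsingleton_coe _ |>.mpr (Set.subsingleton_singleton.anti hsub)
  exact topologicalKrullDim_zero_of_discreteTopology _

theorem natCast_le_ringKrullDim_of_isStandardSmoothOfRelativeDimension (k A : Type*) [Field k]
    [CommRing A] [Nontrivial A] [Algebra k A] (n : ℕ)
    [Algebra.IsStandardSmoothOfRelativeDimension n k A] : n ≤ ringKrullDim A := by
  obtain ⟨g, hg⟩ := Algebra.IsStandardSmoothOfRelativeDimension.exists_etale_mvPolynomial n k A
  let := g.toAlgebra
  have : Algebra.Etale (MvPolynomial (Fin n) k) A := hg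
  exact le_ringKrullDim_of_flat (n := n) (MvPolynomial (Fin n) k) fun P _ =>
    (height_eq_of_isMaximal_mvPolynomial n P).ge

theorem exists_irreducibleComponents_topologicalKrullDim_le_zero_of_etale (k : Type*) [Field k]
    {X : Scheme} [JacobsonSpace X] {A : CommRingCat} [Nontrivial A] [Algebra k A]
    [Algebra.Etale k A] (j : Spec A ⟶ X) [IsOpenImmersion j] :
    ∃ T ∈ irreducibleComponents X, topologicalKrullDim T ≤ 0 := by
  have : Module.Finite k A := Algebra.FormallyUnramified.finite_of_free k A
  have : IsArtinianRing A := IsArtinianRing.of_finite k A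
  have : DiscreteTopology (Spec A) := inferInstanceAs (DiscreteTopology (PrimeSpectrum A))
  obtain ⟨p⟩ : Nonempty (Spec A) := inferInstanceAs (Nonempty (PrimeSpectrum A))
  have hp : IsOpen {j p} := by
    simpa using j.isOpenEmbedding.isOpenMap {p} (isOpen_discrete _)
  exact ⟨_, irreducibleComponent_mem_irreducibleComponents (j p),
    topologicalKrullDim_irreducibleComponent_le_zero hp⟩

theorem eq_one_of_isCurve (k : Type*) [Field k] {X : Scheme} [JacobsonSpace X] (hX : IsCurve X)
    {A : CommRingCat} [Nontrivial A] [Algebra k A] {n : ℕ}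
    [Algebra.IsStandardSmoothOfRelativeDimension n k A] (j : Spec A ⟶ X) [IsOpenImmersion j] :
    n = 1 := by
  apply le_antisymm
  · have hle := calc (n : WithBot ℕ∞) ≤ ringKrullDim A :=
        natCast_le_ringKrullDim_of_isStandardSmoothOfRelativeDimension k A n
      _ = topologicalKrullDim (PrimeSpectrum A) :=
        (PrimeSpectrum.topologicalKrullDim_eq_ringKrullDim A).symm
      _ ≤ topologicalKrullDim X := j.isOpenEmbedding.isInducing.topologicalKrullDim_le
      _ ≤ 1 := topologicalKrullDim_le_of_forall_irreducibleComponents fun T hT => (hX T hT).le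
    exact_mod_cast hle
  · by_contra hn
    obtain rfl : n = 0 := by lia
    obtain ⟨T, hT, hdim⟩ := exists_irreducibleComponents_topologicalKrullDim_le_zero_of_etale k j
    rw [hX T hT] at hdim
    exact absurd hdim (by decide)

theorem smoothOfRelativeDimension_one_of_isCurve {k : Type} [Field k] {X : Scheme}
    (s : X ⟶ Spec (.of k)) [Smooth s] (hX : IsCurve X) : SmoothOfRelativeDimension 1 s where
  exists_isStandardSmoothOfRelativeDimension x := by
    have : JacobsonSpace (Spec (.of k)) :=
      PrimeSpectrum.isJacobsonRing_iff_jacobsonSpace.mp (inferInstanceAs (IsJacobsonRing k))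
    have : JacobsonSpace X := LocallyOfFiniteType.jacobsonSpace s
    have : Subsingleton (Spec (.of k)) := inferInstanceAs (Subsingleton (PrimeSpectrum k))
    obtain ⟨U, hU, V, hV, hx, e, hsmooth⟩ := Smooth.exists_isStandardSmooth s x
    refine ⟨U, hU, V, hV, hx, e, ?_⟩
    obtain rfl : U = ⊤ := eq_top_iff.mpr fun y _ => Subsingleton.elim (s x) y ▸ e hx
    let : Field Γ(Spec (.of k), ⊤) :=
      ((Scheme.ΓSpecIso (.of k)).commRingCatIsoToRingEquiv.isField (Field.toIsField k)).toField
    let := (s.appLE ⊤ V e).hom.toAlgebra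
    have : Nonempty V := ⟨x, hx⟩
    obtain ⟨_, _, _, _, ⟨P⟩⟩ := hsmooth
    have hP : Algebra.IsStandardSmoothOfRelativeDimension P.dimension Γ(Spec (.of k), ⊤) Γ(X, V) :=
      ⟨_, _, _, ‹_›, P, rfl⟩
    have hdim : P.dimension = 1 := eq_one_of_isCurve Γ(Spec (.of k), ⊤) hX hV.fromSpec
    exact hdim ▸ hP

end Dimension

section EtaleCoordinates

universe u

theorem exists_dense_of_disjoint_sup {X : Type*} [TopologicalSpace X] [NoetherianSpace X]
    {p : Opens X → Prop} (bot : p ⊥) (sup : ∀ U V, Disjoint U V → p U → p V → p (U ⊔ V))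
    (exists_le : ∀ W ≠ ⊥, ∃ U ≤ W, U ≠ ⊥ ∧ p U) :
    ∃ U : Opens X, Dense (U : Set X) ∧ p U := by
  obtain ⟨U, hU, hmax⟩ := (wellFounded_gt (α := Opens X)).has_min {U | p U} ⟨⊥, bot⟩
  refine ⟨U, ?_, hU⟩
  by_contra hdense
  let W : Opens X := ⟨(closure (U : Set X))ᶜ, isClosed_closure.isOpen_compl⟩
  have hW : W ≠ ⊥ := by
    simpa [W, ← Opens.coe_eq_empty, dense_iff_closure_eq] using hdense
  obtain ⟨V, hVW, hV, hpV⟩ := exists_le W hW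
  have hdisj : Disjoint U V := by
    rw [← Opens.coe_disjoint]
    exact Set.disjoint_left.mpr fun x hxU hxV => hVW hxV (subset_closure hxU)
  refine hmax _ (sup U V hdisj hU hpV) (lt_of_le_of_ne le_sup_left fun h => hV ?_)
  exact disjoint_self.mp (hdisj.mono_left (h ▸ le_sup_right))

variable {R : Type u} [CommRing R] {X : Scheme.{u}} (s : X ⟶ Spec (.of R)) (n : ℕ)

/-- `HasEtaleCoordinates s n U` says that `U` is an affine open of the `R`-scheme `s : X ⟶ Spec R`
carrying étale coordinates `x₁, …, xₙ`, that is, an étale `R`-morphism to affine `n`-space, which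
is encoded as `Spec R[x₁, …, xₙ]`. Such opens are stable under finite disjoint unions, which is how
one that is dense arises. -/
def HasEtaleCoordinates (U : X.Opens) : Prop :=
  IsAffineOpen U ∧ ∃ f : U.toScheme ⟶ Spec (.of (MvPolynomial (Fin n) R)),
    Etale f ∧ f ≫ Spec.map (CommRingCat.ofHom MvPolynomial.C) = U.ι ≫ s

variable {s n}

theorem hasEtaleCoordinates_opensRange {Y : Scheme.{u}} [IsAffine Y] (j : Y ⟶ X)
    [IsOpenImmersion j] (f : Y ⟶ Spec (.of (MvPolynomial (Fin n) R))) [Etale f]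
    (hf : f ≫ Spec.map (CommRingCat.ofHom MvPolynomial.C) = j ≫ s) :
    HasEtaleCoordinates s n j.opensRange :=
  ⟨isAffineOpen_opensRange j, j.isoOpensRange.inv ≫ f, inferInstance, by simp [hf]⟩

open scoped Function in
theorem HasEtaleCoordinates.iSup {ι : Type*} [Finite ι] {U : ι → X.Opens}
    (hU : ∀ i, HasEtaleCoordinates s n (U i)) (hdisj : Pairwise (Disjoint on U)) :
    HasEtaleCoordinates s n (⨆ i, U i) := by
  choose haff f hf hfs using hU
  have hcov : ⨆ i, (⨆ i, U i).ι ⁻¹ᵁ U i = ⊤ :=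
    top_le_iff.mp fun x _ =>
      let ⟨i, hi⟩ := Opens.mem_iSup.mp x.2
      Opens.mem_iSup.mpr ⟨i, hi⟩
  have hdisj' {i j : ι} (hij : i ≠ j) : (⨆ i, U i).ι ⁻¹ᵁ U i ⊓ (⨆ i, U i).ι ⁻¹ᵁ U j = ⊥ := by
    rw [← Scheme.Hom.preimage_inf, (hdisj hij).eq_bot, Scheme.Hom.preimage_bot]
  obtain ⟨hc⟩ := nonempty_isColimit_cofanMk_of (fun i => X.homOfLE (le_iSup U i))
    (by simpa only [Scheme.opensRange_homOfLE] using hcov)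
    (fun i j hij => by simpa [Function.onFun, disjoint_iff] using hdisj' hij)
  have : IsZariskiLocalAtSource @Etale.{u} :=
    HasRingHomProperty.instIsZariskiLocalAtSource (Q := RingHom.Etale)
  have hι i : X.homOfLE (le_iSup U i) ≫ Limits.Cofan.IsColimit.desc hc f = f i :=
    Limits.Cofan.IsColimit.fac hc f i
  refine ⟨.iSup_of_disjoint haff hdisj, Limits.Cofan.IsColimit.desc hc f, ?_, ?_⟩
  · exact IsZariskiLocalAtSource.of_openCover (Scheme.Opens.iSupOpenCover U) fun i => by
      exact hι i ▸ hf i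
  · refine Limits.Cofan.IsColimit.hom_ext hc _ _ fun i => ?_
    change X.homOfLE (le_iSup U i) ≫ _ = X.homOfLE (le_iSup U i) ≫ _
    rw [reassoc_of% hι i, hfs, X.homOfLE_ι_assoc]

theorem exists_le_hasEtaleCoordinates [SmoothOfRelativeDimension n s] {W : X.Opens} (hW : W ≠ ⊥) :
    ∃ U ≤ W, U ≠ ⊥ ∧ HasEtaleCoordinates s n U := by
  obtain ⟨x, hx⟩ := Opens.ne_bot_iff_nonempty _ |>.mp hW
  obtain ⟨V, hV, hxV, hVW⟩ := Opens.isBasis_iff_nbhd.mp X.isBasis_affineOpens hx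
  have hV : IsAffineOpen V := hV
  have : IsZariskiLocalAtSource (@SmoothOfRelativeDimension.{u} n) :=
    HasRingHomProperty.instIsZariskiLocalAtSource
      (Q := RingHom.Locally (RingHom.IsStandardSmoothOfRelativeDimension n))
  obtain ⟨φ, hφ⟩ := Spec.map_surjective (hV.fromSpec ≫ s)
  have : SmoothOfRelativeDimension n (Spec.map φ) := hφ ▸ IsZariskiLocalAtSource.comp ‹_› _
  rw [HasRingHomProperty.Spec_iff (P := @SmoothOfRelativeDimension n)] at this
  obtain ⟨T, hT, hsmooth⟩ := this
  obtain ⟨p, rfl⟩ : x ∈ Set.range hV.fromSpec := hV.range_fromSpec ▸ hxV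
  obtain ⟨t, ht, htp⟩ : ∃ t ∈ T, t ∉ p.asIdeal := by
    by_contra! hTp
    exact p.isPrime.ne_top (top_le_iff.mp (hT ▸ Ideal.span_le.mpr hTp))
  obtain ⟨g, hg, hge⟩ := (hsmooth t ht).exists_etale_mvPolynomial
  let i := Spec.map (CommRingCat.ofHom (algebraMap Γ(X, V) (Localization.Away t)))
  have : IsOpenImmersion i := IsOpenImmersion.of_isLocalization t
  let f := Spec.map (CommRingCat.ofHom g)
  have : Etale f := (HasRingHomProperty.Spec_iff (P := @Etale)).mpr hge
  refine ⟨(i ≫ hV.fromSpec).opensRange, ?_, ?_, hasEtaleCoordinates_opensRange _ f ?_⟩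
  · rw [Scheme.Hom.opensRange_comp]
    exact ((Scheme.Hom.image_le_opensRange _ _).trans_eq hV.opensRange_fromSpec).trans hVW
  · obtain ⟨q, -⟩ : p ∈ Set.range (PrimeSpectrum.comap (algebraMap _ (Localization.Away t))) := by
      rwa [PrimeSpectrum.localization_away_comap_range _ t]
    exact (Opens.ne_bot_iff_nonempty _).mpr ⟨_, q, rfl⟩
  · rw [Category.assoc, ← hφ, ← Spec.map_comp, ← Spec.map_comp]
    exact congrArg (Spec.map <| CommRingCat.ofHom ·) hg

theorem exists_dense_hasEtaleCoordinates [NoetherianSpace X] (s : X ⟶ Spec (.of R)) (n : ℕ)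
    [SmoothOfRelativeDimension n s] :
    ∃ U : X.Opens, Dense (U : Set X) ∧ HasEtaleCoordinates s n U := by
  refine exists_dense_of_disjoint_sup ?_ (fun U V hUV hU hV => ?_)
    fun W hW => exists_le_hasEtaleCoordinates hW
  · rw [← iSup_of_empty Empty.elim]
    exact HasEtaleCoordinates.iSup (fun i => i.elim) (fun i => i.elim)
  · rw [sup_eq_iSup]
    refine HasEtaleCoordinates.iSup (Bool.forall_bool.mpr ⟨hV, hU⟩) ?_
    simpa [pairwise_disjoint_on_bool]

end EtaleCoordinates

section Hypersurface

universe u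

theorem exists_away_algEquiv_quotient_of_etale (R A : Type*) (n : ℕ) [CommRing R] [IsDomain R]
    [IsNoetherianRing R] [Infinite (MvPolynomial (Fin n) R)] [CommRing A] [Algebra R A]
    [Algebra (MvPolynomial (Fin n) R) A] [IsScalarTower R (MvPolynomial (Fin n) R) A]
    [Algebra.Etale (MvPolynomial (Fin n) R) A] :
    ∃ h : MvPolynomial (Fin n) R, h ≠ 0 ∧ ∃ g : MvPolynomial (Fin (n + 1)) R,
      Nonempty (Localization.Away (algebraMap (MvPolynomial (Fin n) R) A h) ≃ₐ[R]
        MvPolynomial (Fin (n + 1)) R ⧸ Ideal.span {g}) := by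
  obtain ⟨h, h0, G, ⟨e⟩⟩ := exists_away_algEquiv_adjoinRoot_of_etale (MvPolynomial (Fin n) R) A
  let E := (MvPolynomial.finSuccEquiv R n).symm
  let e' : AdjoinRoot G ≃ₐ[R] MvPolynomial (Fin (n + 1)) R ⧸ Ideal.span {E G} :=
    Ideal.quotientEquivAlg (Ideal.span {G}) _ E (by rw [Ideal.map_span, Set.image_singleton]; rfl)
  exact ⟨h, h0, E G, ⟨(e.restrictScalars R).trans e'⟩⟩

theorem denseRange_comap_algebraMap_away {R A : Type*} [CommRing R] [IsDomain R] [CommRing A]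
    [Algebra R A] [Module.IsTorsionFree R A] {h : R} (h0 : h ≠ 0) :
    DenseRange (PrimeSpectrum.comap (algebraMap A (Localization.Away (algebraMap R A h)))) := by
  rw [PrimeSpectrum.denseRange_comap_iff_ker_le_nilRadical]
  suffices Function.Injective (algebraMap A (Localization.Away (algebraMap R A h))) by
    rw [(RingHom.injective_iff_ker_eq_bot _).mp this]
    exact bot_le
  refine IsLocalization.injective _ (M := Submonoid.powers (algebraMap R A h)) ?_
  refine Submonoid.powers_le.mpr (mem_nonZeroDivisors_iff_left.mpr fun z hz => ?_)
  rw [← Algebra.smul_def] at hz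
  exact (smul_eq_zero.mp hz).resolve_left h0

variable {R : Type u} [CommRing R] [IsDomain R] [IsNoetherianRing R] {n : ℕ}
  [Infinite (MvPolynomial (Fin n) R)]

theorem exists_isOpenImmersion_isDominant_of_etale (A : Type u) [CommRing A] [Algebra R A]
    [Algebra (MvPolynomial (Fin n) R) A] [IsScalarTower R (MvPolynomial (Fin n) R) A]
    [Algebra.Etale (MvPolynomial (Fin n) R) A] :
    ∃ (g : MvPolynomial (Fin (n + 1)) R)
      (j : Spec (.of (MvPolynomial (Fin (n + 1)) R ⧸ Ideal.span {g})) ⟶ Spec (.of A)),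
      IsOpenImmersion j ∧ IsDominant j ∧
        j ≫ Spec.map (CommRingCat.ofHom (algebraMap R A)) =
          Spec.map (CommRingCat.ofHom (algebraMap R _)) := by
  obtain ⟨h, h0, g, ⟨e⟩⟩ := exists_away_algEquiv_quotient_of_etale R A n
  let L := Localization.Away (algebraMap (MvPolynomial (Fin n) R) A h)
  let i : Spec (.of L) ⟶ Spec (.of A) := Spec.map (CommRingCat.ofHom (algebraMap A L))
  have : IsOpenImmersion i := IsOpenImmersion.of_isLocalization (algebraMap _ A h)
  have : IsDominant i := ⟨denseRange_comap_algebraMap_away h0⟩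
  refine ⟨g, Spec.map e.toRingEquiv.toCommRingCatIso.hom ≫ i, inferInstance, inferInstance, ?_⟩
  simp only [i, ← Spec.map_comp]
  exact congrArg (Spec.map <| CommRingCat.ofHom ·) (RingHom.ext e.commutes)

theorem HasEtaleCoordinates.exists_isOpenImmersion_isDominant {X : Scheme.{u}}
    {s : X ⟶ Spec (.of R)} {U : X.Opens} (hU : HasEtaleCoordinates s n U)
    (hdense : Dense (U : Set X)) :
    ∃ (g : MvPolynomial (Fin (n + 1)) R)
      (j : Spec (.of (MvPolynomial (Fin (n + 1)) R ⧸ Ideal.span {g})) ⟶ X),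
      IsOpenImmersion j ∧ IsDominant j ∧ j ≫ s = Spec.map (CommRingCat.ofHom (algebraMap R _)) := by
  obtain ⟨haff, f, hf, hfs⟩ := hU
  obtain ⟨φ, hφ⟩ := Spec.map_surjective (haff.isoSpec.inv ≫ f)
  have hφe : φ.hom.Etale := by
    rw [← HasRingHomProperty.Spec_iff (P := @Etale), hφ]
    infer_instance
  algebraize [φ.hom, φ.hom.comp MvPolynomial.C]
  have : Algebra.Etale (MvPolynomial (Fin n) R) Γ(X, U) := hφe
  obtain ⟨g, j, hj, hjdom, hjs⟩ :=
    exists_isOpenImmersion_isDominant_of_etale (R := R) (n := n) Γ(X, U)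
  have : IsDominant haff.fromSpec := ⟨by rwa [DenseRange, haff.range_fromSpec]⟩
  refine ⟨g, j ≫ haff.fromSpec, inferInstance, inferInstance, ?_⟩
  rw [Category.assoc, ← hjs, ← haff.isoSpec_inv_ι, Category.assoc, ← hfs, ← Category.assoc _ f,
    ← hφ, ← Spec.map_comp]
  rfl

theorem exists_dense_isAffine_iso_hypersurface {X : Scheme.{u}} [CompactSpace X]
    (s : X ⟶ Spec (.of R)) [SmoothOfRelativeDimension n s] :
    ∃ (U : X.Opens) (g : MvPolynomial (Fin (n + 1)) R)
      (e : U.toScheme ≅ Spec (.of (MvPolynomial (Fin (n + 1)) R ⧸ Ideal.span {g}))),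
      Dense (U : Set X) ∧ IsAffine U.toScheme ∧
        e.hom ≫ Spec.map (CommRingCat.ofHom (algebraMap R _)) = U.ι ≫ s := by
  have := SmoothOfRelativeDimension.smooth n s
  have := LocallyOfFiniteType.isLocallyNoetherian s
  have : IsNoetherian X := {}
  obtain ⟨W, hW, hcoord⟩ := exists_dense_hasEtaleCoordinates s n
  obtain ⟨g, j, hj, hjdom, hjs⟩ := hcoord.exists_isOpenImmersion_isDominant hW
  exact ⟨j.opensRange, g, j.isoOpensRange.symm, hjdom.denseRange, isAffineOpen_opensRange j,
    by simp [← hjs]⟩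

end Hypersurface

theorem exists_dense_open_smooth_plane_curve_general {k : Type} [Field k] {X : Scheme}
    [CompactSpace X] (s : X ⟶ Spec (.of k)) [Smooth s] (hX : IsCurve X) :
    ∃ (U : X.Opens) (g : MvPolynomial (Fin 2) k),
      Dense (U : Set X) ∧ IsAffine U.toScheme ∧
      Smooth (Spec.map (CommRingCat.ofHom
        (algebraMap k (MvPolynomial (Fin 2) k ⧸ Ideal.span {g})))) ∧
      ∃ e : U.toScheme ≅ Spec (.of (MvPolynomial (Fin 2) k ⧸ Ideal.span {g})),
        e.hom ≫ Spec.map (CommRingCat.ofHom (algebraMap k _)) = U.ι ≫ s := by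
  have := smoothOfRelativeDimension_one_of_isCurve s hX
  obtain ⟨U, g, e, hU, haff, he⟩ := exists_dense_isAffine_iso_hypersurface (n := 1) s
  refine ⟨U, g, hU, haff, ?_, e, he⟩
  rw [← Iso.eq_inv_comp] at he
  rw [he]
  infer_instance

/-- **Corollary A.4** of the paper.  Every smooth projective curve over a
perfect field `k` has a dense affine open subscheme which is isomorphic to a
smooth affine plane curve, i.e. to a smooth closed subscheme of `𝔸²_k`
defined by a single polynomial equation. -/
theorem exists_dense_open_smooth_plane_curve
    (k : Type) [Field k] [PerfectField k] (Z : SmoothProjCurve k) :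
    ∃ (U : Z.X.Opens) (g : MvPolynomial (Fin 2) k),
      Dense (U : Set Z.X) ∧ IsAffine U.toScheme ∧
      IsSmooth (Spec.map (CommRingCat.ofHom
        (algebraMap k (MvPolynomial (Fin 2) k ⧸ Ideal.span {g})))) ∧
      Nonempty (U.toScheme ≅
        Spec (CommRingCat.of (MvPolynomial (Fin 2) k ⧸ Ideal.span {g}))) := by
  have : Smooth Z.structMap := Z.smooth
  have : IsProper Z.structMap := Z.proper
  have : CompactSpace Z.X := QuasiCompact.compactSpace_of_compactSpace Z.structMap
  obtain ⟨U, g, hU, haff, hsmooth, e, -⟩ :=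
    exists_dense_open_smooth_plane_curve_general Z.structMap Z.isCurve
  exact ⟨U, g, hU, haff, hsmooth, ⟨e⟩⟩

end BakerModels
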